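/- Let Q2 = conv({(0,0,0,0), (1,0,0,0), (0,1,0,1), (0,0,1,1), (1,1,1,0), (1,1,1,1)}) ⊂ ℝ^4. Then ℤA(Q2) = ℤ^5, and Q2 has the integer decomposition property: for every positive integer n and every a ∈ nQ2 ∩ ℤ^4 there exist a_1,…,a_n ∈ Q2 ∩ ℤ^4 with a = a_1 + ⋯ + a_n. Consequently Q2 is normal: ℕA(Q2) = ℤA(Q2) ∩ ℝ≥0A(Q2). -/

import Mathlib

/-!
STATEMENT 13: `Q2 = conv({0000, 1000, 0101, 0011, 1110, 1111}) ⊆ ℝ⁴` satisfies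
`ℤA(Q2) = ℤ⁵`, has the integer decomposition property, and is therefore normal.
-/

open scoped NNReal Pointwise

noncomputable section

def intCast {α : Type*} (v : α → ℤ) : α → ℝ := fun i => (v i : ℝ)

def latticeA {α : Type*} (L : Set (α → ℤ)) : Set ((α → ℤ) × ℤ) :=
  (fun v => (v, (1 : ℤ))) '' L

def prodCast {α : Type*} (x : (α → ℤ) × ℤ) : (α → ℝ) × ℝ :=
  (intCast x.1, (x.2 : ℝ))

/-- Normality: `ℕA(P) = ℤA(P) ∩ ℝ≥0A(P)`. -/
def IsNormalPolytope {α : Type*} (L : Set (α → ℤ)) : Prop :=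
  ∀ x : (α → ℤ) × ℤ,
    x ∈ AddSubmonoid.closure (latticeA L) ↔
      x ∈ AddSubgroup.closure (latticeA L) ∧
        prodCast x ∈ Submodule.span ℝ≥0 (prodCast '' latticeA L)

/-- The six vertices (= lattice points) of `Q2`. -/
def V2 : Set (Fin 4 → ℤ) :=
  {![0,0,0,0], ![1,0,0,0], ![0,1,0,1], ![0,0,1,1], ![1,1,1,0], ![1,1,1,1]}

/-- The polytope `Q2`. -/
def Q2 : Set (Fin 4 → ℝ) := convexHull ℝ (intCast '' V2)

/-!
The six lifted vertices `w₀, …, w₅` of `Q2` span `ℤ⁵` and satisfy, up to scaling, the single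
relation `2 w₀ + 2 w₅ = w₁ + w₂ + w₃ + w₄`. The ways of writing an integer point as a real
combination of them therefore form a line, with a parameter `s` chosen so that four of the
coefficients are an integer minus `s` and the other two an integer plus `2 * s`. If all six are
nonnegative at a real `s`, they remain so at the integer `⌈s⌉`, so an integer point of the cone lies
in the monoid generated by the `wᵢ`.
-/

section General

variable {α : Type*} {L : Set (α → ℤ)}

theorem prodCast_mem_span_of_mem_closure {A : Set ((α → ℤ) × ℤ)} {x : (α → ℤ) × ℤ}
    (hx : x ∈ AddSubmonoid.closure A) : prodCast x ∈ Submodule.span ℝ≥0 (prodCast '' A) := by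
  let castHom : (α → ℤ) × ℤ →+ (α → ℝ) × ℝ :=
    ((Int.castAddHom ℝ).compLeft α).prodMap (Int.castAddHom ℝ)
  have hmap : castHom x ∈ AddSubmonoid.closure (castHom '' A) :=
    AddMonoidHom.map_mclosure castHom A ▸ AddSubmonoid.mem_map_of_mem castHom hx
  exact Submodule.closure_subset_span hmap

theorem isNormalPolytope_iff_of_closure_eq_top (hL : AddSubgroup.closure (latticeA L) = ⊤) :
    IsNormalPolytope L ↔ ∀ x : (α → ℤ) × ℤ,
      prodCast x ∈ Submodule.span ℝ≥0 (prodCast '' latticeA L) →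
        x ∈ AddSubmonoid.closure (latticeA L) := by
  simp only [IsNormalPolytope, hL, AddSubgroup.mem_top, true_and]
  exact forall_congr' fun _ => ⟨Iff.mpr, fun h => ⟨prodCast_mem_span_of_mem_closure, h⟩⟩

theorem mk_mem_span_of_mem_smul_convexHull {x : α → ℝ} {r : ℝ} (hr : 0 ≤ r)
    (hx : x ∈ r • convexHull ℝ (intCast '' L)) :
    (x, r) ∈ Submodule.span ℝ≥0 (prodCast '' latticeA L) := by
  obtain ⟨q, hq, rfl⟩ := hx
  let cone : PointedCone ℝ ((α → ℝ) × ℝ) := PointedCone.hull ℝ (prodCast '' latticeA L)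
  let lift : (α → ℝ) →ᵃ[ℝ] (α → ℝ) × ℝ := (AffineMap.id ℝ _).prod (AffineMap.const ℝ _ 1)
  have hvertices : intCast '' L ⊆ lift ⁻¹' cone := by
    rintro _ ⟨v, hv, rfl⟩
    exact Submodule.subset_span ⟨(v, 1), ⟨v, hv, rfl⟩, by simp [prodCast, lift]⟩
  have hlift : (q, 1) ∈ cone := convexHull_min hvertices (cone.convex.affine_preimage lift) hq
  have hsmul : r • (q, (1 : ℝ)) ∈ cone := cone.smul_mem hr hlift
  rwa [Prod.smul_mk, smul_eq_mul, mul_one] at hsmul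

theorem exists_eq_sum_of_mem_closure_latticeA {a : α → ℤ} {n : ℕ}
    (h : (a, (n : ℤ)) ∈ AddSubmonoid.closure (latticeA L)) :
    ∃ f : Fin n → (α → ℤ), (∀ i, f i ∈ L) ∧ a = ∑ i, f i := by
  obtain ⟨l, hl, hsum⟩ := AddSubmonoid.exists_list_of_mem_closure h
  have hmem : ∀ y ∈ l, y.1 ∈ L ∧ y.2 = 1 := by
    intro y hy
    obtain ⟨v, hv, rfl⟩ := hl y hy
    exact ⟨hv, rfl⟩
  have hfst : (l.map Prod.fst).sum = a :=
    (map_list_sum (AddMonoidHom.fst (α → ℤ) ℤ) l).symm.trans (congrArg Prod.fst hsum)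
  have hsnd : (l.map Prod.snd).sum = n :=
    (map_list_sum (AddMonoidHom.snd (α → ℤ) ℤ) l).symm.trans (congrArg Prod.snd hsum)
  obtain rfl : l.length = n := by
    rw [List.map_congr_left fun y hy => (hmem y hy).2] at hsnd
    simpa using hsnd
  exact ⟨fun i => l[i].1, fun i => (hmem _ (l.getElem_mem i.2)).1,
    hfst.symm.trans (Fin.sum_univ_fun_getElem l Prod.fst).symm⟩

theorem IsNormalPolytope.exists_eq_sum_of_mem_smul_convexHull (hN : IsNormalPolytope L)
    (hL : AddSubgroup.closure (latticeA L) = ⊤) {n : ℕ} {a : α → ℤ}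
    (ha : intCast a ∈ (n : ℝ) • convexHull ℝ (intCast '' L)) :
    ∃ f : Fin n → (α → ℤ), (∀ i, f i ∈ L) ∧ a = ∑ i, f i := by
  have hcone : prodCast (a, (n : ℤ)) ∈ Submodule.span ℝ≥0 (prodCast '' latticeA L) := by
    simpa [prodCast] using mk_mem_span_of_mem_smul_convexHull n.cast_nonneg ha
  exact exists_eq_sum_of_mem_closure_latticeA
    ((isNormalPolytope_iff_of_closure_eq_top hL).1 hN _ hcone)

end General

/-- The vertices of `Q2` lifted to height `1`, as an indexed family generating `ℕA(Q2)`. -/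
def liftedVertex : Fin 6 → (Fin 4 → ℤ) × ℤ :=
  ![(![0,0,0,0], 1), (![1,0,0,0], 1), (![0,1,0,1], 1), (![0,0,1,1], 1), (![1,1,1,0], 1),
    (![1,1,1,1], 1)]

/-- The coefficient vectors expressing `x` through the lifted vertices, as a line with parameter
`s` and direction `(2, -1, -1, -1, -1, 2)`. The parameter is normalised to be the sum of the last
two coefficients. -/
def vertexCoeffs {R : Type*} [Ring R] (x : (Fin 4 → R) × R) (s : R) : Fin 6 → R :=
  ![x.2 - x.1 0 - x.1 1 - x.1 2 + 2 * s, x.1 0 - s, x.1 1 - s, x.1 2 - s,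
    x.1 1 + x.1 2 - x.1 3 - s, x.1 3 - x.1 1 - x.1 2 + 2 * s]

theorem range_liftedVertex : Set.range liftedVertex = latticeA V2 := by
  simp only [liftedVertex, latticeA, V2, Set.image_insert_eq, Set.image_singleton,
    Matrix.range_cons, Matrix.range_empty, Set.union_empty, Set.singleton_union]

theorem sum_vertexCoeffs_smul_liftedVertex (x : (Fin 4 → ℤ) × ℤ) (s : ℤ) :
    ∑ i, vertexCoeffs x s i • liftedVertex i = x := by
  ext j
  · fin_cases j <;> simp [Fin.sum_univ_six, vertexCoeffs, liftedVertex] <;> ring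
  · simp only [Fin.sum_univ_six, vertexCoeffs, liftedVertex, Matrix.cons_val, Prod.snd_add,
      Prod.smul_snd, smul_eq_mul, mul_one]
    ring

theorem eq_vertexCoeffs_of_sum_smul_eq {c : Fin 6 → ℝ} {x : (Fin 4 → ℝ) × ℝ}
    (h : ∑ i, c i • prodCast (liftedVertex i) = x) : c = vertexCoeffs x (c 4 + c 5) := by
  subst h
  ext j
  fin_cases j <;>
    simp [Fin.sum_univ_six, vertexCoeffs, liftedVertex, prodCast, intCast] <;> ring

theorem vertexCoeffs_ceil_nonneg {x : (Fin 4 → ℤ) × ℤ} {s : ℝ}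
    (h : 0 ≤ vertexCoeffs (prodCast x) s) : 0 ≤ vertexCoeffs x ⌈s⌉ := by
  have sub_ceil {k : ℤ} (hk : 0 ≤ k - s) : 0 ≤ k - ⌈s⌉ :=
    sub_nonneg.2 (Int.ceil_le.2 (sub_nonneg.1 hk))
  have add_two_mul_ceil {k : ℤ} (hk : 0 ≤ k + 2 * s) : 0 ≤ k + 2 * ⌈s⌉ := by
    have : (0 : ℝ) ≤ k + 2 * ⌈s⌉ := by linarith [Int.le_ceil s]
    exact_mod_cast this
  intro i
  have hi := h i
  fin_cases i
  · exact add_two_mul_ceil (by push_cast; exact hi)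
  · exact sub_ceil hi
  · exact sub_ceil hi
  · exact sub_ceil hi
  · exact sub_ceil (by push_cast; exact hi)
  · exact add_two_mul_ceil (by push_cast; exact hi)

theorem closure_latticeA_V2_eq_top : AddSubgroup.closure (latticeA V2) = ⊤ := by
  refine (AddSubgroup.eq_top_iff' _).2 fun x => ?_
  rw [← range_liftedVertex, AddSubgroup.mem_closure_range_iff_of_fintype]
  exact ⟨vertexCoeffs x 0, (sum_vertexCoeffs_smul_liftedVertex x 0).symm⟩

theorem mem_closure_latticeA_V2_of_vertexCoeffs_nonneg {x : (Fin 4 → ℤ) × ℤ} {s : ℤ}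
    (h : 0 ≤ vertexCoeffs x s) : x ∈ AddSubmonoid.closure (latticeA V2) := by
  rw [← range_liftedVertex, ← sum_vertexCoeffs_smul_liftedVertex x s]
  refine sum_mem fun i _ => ?_
  lift vertexCoeffs x s i to ℕ using h i with k
  rw [natCast_zsmul]
  exact nsmul_mem (AddSubmonoid.subset_closure (Set.mem_range_self i)) k

theorem isNormalPolytope_V2 : IsNormalPolytope V2 := by
  refine (isNormalPolytope_iff_of_closure_eq_top closure_latticeA_V2_eq_top).2 fun x hx => ?_
  rw [← range_liftedVertex, ← Set.range_comp, Submodule.mem_span_range_iff_exists_fun] at hx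
  obtain ⟨c, hc⟩ := hx
  have hcoeffs := eq_vertexCoeffs_of_sum_smul_eq (c := fun i => (c i : ℝ)) hc
  have hnonneg : 0 ≤ vertexCoeffs (prodCast x) (c 4 + c 5) :=
    hcoeffs ▸ fun i => (c i).coe_nonneg
  exact mem_closure_latticeA_V2_of_vertexCoeffs_nonneg (vertexCoeffs_ceil_nonneg hnonneg)

theorem stmt_13 :
    -- `ℤA(Q2) = ℤ⁵`
    AddSubgroup.closure (latticeA V2) = ⊤ ∧
    -- the integer decomposition property
    (∀ n : ℕ, 0 < n → ∀ a : Fin 4 → ℤ,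
      intCast a ∈ (n : ℝ) • Q2 →
        ∃ f : Fin n → (Fin 4 → ℤ), (∀ i, f i ∈ V2) ∧ a = ∑ i, f i) ∧
    -- normality
    IsNormalPolytope V2 := by
  exact ⟨closure_latticeA_V2_eq_top,
    fun _ _ _ ha =>
      isNormalPolytope_V2.exists_eq_sum_of_mem_smul_convexHull closure_latticeA_V2_eq_top ha,
    isNormalPolytope_V2⟩

end
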